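/- arXiv:1803.11038 — 5 statements merged into one kernel-verified Lean document; each statement's English description precedes it below -/
import Mathlib

section
/- In Z, for all A ⊆ I, B ⊆ S, and distinct x, y ∈ I: if A;B splits the pair (x,y), then B splits (x,y). Similarly, for all A ⊆ S, B ⊆ I, and distinct x, y ∈ I: if A;B splits (x,y), then A splits (x,y). -/
open FirstOrder FirstOrder.Language

/-- Relation symbols of the language of atom structures: a unary `I`,
a binary `C` and a ternary `P`. -/
inductive AtomRel : ℕ → Type
  | I : AtomRel 1
  | C : AtomRel 2
  | P : AtomRel 3

/-- The first-order language with one ternary relation symbol `P`, one binary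
relation symbol `C` and one unary relation symbol `I`. -/
def atomLang : FirstOrder.Language :=
  ⟨fun _ => Empty, AtomRel⟩

/-- Function symbols of the language of the term algebras: a constant `1'`,
unary symbols `−` (complement) and `⁻` (converse), binary symbols `+` and `;`. -/
inductive AlgFun : ℕ → Type
  | one : AlgFun 0
  | compl : AlgFun 1
  | conv : AlgFun 1
  | add : AlgFun 2
  | comp : AlgFun 2

/-- The first-order language with binary operations `+` and `;`, unary
operations `−` and `⁻`, and a constant `1'`. -/
def algLang : FirstOrder.Language :=
  ⟨AlgFun, fun _ => Empty⟩

section Generic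

variable {M : Type} [atomLang.Structure M]

/-- The interpretation of the unary relation symbol `I`. -/
def mI (a : M) : Prop := Structure.RelMap (L := atomLang) (AtomRel.I : atomLang.Relations 1) ![a]

/-- The interpretation of the binary relation symbol `C`. -/
def mC (a b : M) : Prop := Structure.RelMap (L := atomLang) (AtomRel.C : atomLang.Relations 2) ![a, b]

/-- The interpretation of the ternary relation symbol `P`. -/
def mP (a b c : M) : Prop := Structure.RelMap (L := atomLang) (AtomRel.P : atomLang.Relations 3) ![a, b, c]

/-- `X ; Y = {u : ∃ x ∈ X, y ∈ Y, P(x,y,u)}`. -/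
def sComp (X Y : Set M) : Set M := {u | ∃ x ∈ X, ∃ y ∈ Y, mP x y u}

/-- `X⁻ = {u : ∃ x ∈ X, C(x,u)}`. -/
def sConv (X : Set M) : Set M := {u | ∃ x ∈ X, mC x u}

/-- The set of elements satisfying `I`. -/
def idSet (M : Type) [atomLang.Structure M] : Set M := {a | mI a}

end Generic

/-- Membership in the term algebra: the smallest collection of subsets of `M`
containing all singletons and the set `I`, closed under binary union,
complementation, `;` and `⁻`. -/
inductive InTA (M : Type) [atomLang.Structure M] : Set M → Prop
  | sing (a : M) : InTA M {a}
  | idset : InTA M (idSet M)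
  | union {X Y : Set M} : InTA M X → InTA M Y → InTA M (X ∪ Y)
  | compl {X : Set M} : InTA M X → InTA M Xᶜ
  | comp {X Y : Set M} : InTA M X → InTA M Y → InTA M (sComp X Y)
  | conv {X : Set M} : InTA M X → InTA M (sConv X)

/-- The term algebra of an atom structure, as a type. -/
def TermAlg (M : Type) [atomLang.Structure M] : Type := {X : Set M // InTA M X}

/-- The term algebra as a structure in the language `algLang`:
`+` is union, `−` is complement, `;` and `⁻` are the operations defined from
`P` and `C`, and `1'` is the set `I`. -/
instance termAlgStructure (M : Type) [atomLang.Structure M] :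
    algLang.Structure (TermAlg M) where
  funMap := fun {_} f v =>
    match f with
    | .one => ⟨idSet M, InTA.idset⟩
    | .compl => ⟨(v 0).1ᶜ, InTA.compl (v 0).2⟩
    | .conv => ⟨sConv (v 0).1, InTA.conv (v 0).2⟩
    | .add => ⟨(v 0).1 ∪ (v 1).1, InTA.union (v 0).2 (v 1).2⟩
    | .comp => ⟨sComp (v 0).1 (v 1).1, InTA.comp (v 0).2 (v 1).2⟩
  RelMap := fun {_} r _ => r.elim

/-- `a` goes from `x` to `y` when `P(x,a,a)` and `P(a,y,a)`. -/
def goes {M : Type} [atomLang.Structure M] (a x y : M) : Prop := mP x a a ∧ mP a y a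

/-- `X` splits the pair `(x,y)` when some `a ∈ X` and some `b ∉ X` both go
from `x` to `y`. -/
def SplitsG {M : Type} [atomLang.Structure M] (X : Set M) (x y : M) : Prop :=
  ∃ a ∈ X, ∃ b ∉ X, goes a x y ∧ goes b x y

/-- The pair `(x,y)` is splitable when `x ≠ y` and at least two distinct
elements go from `x` to `y`. -/
def SplitableG {M : Type} [atomLang.Structure M] (x y : M) : Prop :=
  x ≠ y ∧ ∃ a b : M, a ≠ b ∧ goes a x y ∧ goes b x y

/-- Converse of a binary relation, as a set of pairs. -/
def relConv {U : Type} (R : Set (U × U)) : Set (U × U) := {p | (p.2, p.1) ∈ R}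

/-- Composition of binary relations, as sets of pairs. -/
def relComp {U : Type} (R T : Set (U × U)) : Set (U × U) :=
  {p | ∃ w, (p.1, w) ∈ R ∧ (w, p.2) ∈ T}

/-- An atom structure is completely representable. -/
def CompRep (M : Type) [atomLang.Structure M] : Prop :=
  ∃ (U : Type) (rep : M → Set (U × U)),
    (∀ a : M, (rep a).Nonempty) ∧
    (∀ a b : M, a ≠ b → Disjoint (rep a) (rep b)) ∧
    (⋃ a : M, rep a) = Set.univ ∧
    (∀ a : M, (mI a ↔ rep a ⊆ Set.diagonal U) ∧
      ((rep a ⊆ Set.diagonal U) ↔ (rep a ∩ Set.diagonal U).Nonempty)) ∧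
    (∀ a b : M, (mC a b ↔ rep b = relConv (rep a)) ∧
      ((rep b = relConv (rep a)) ↔ (rep b ∩ relConv (rep a)).Nonempty)) ∧
    (∀ a b c : M, (mP a b c ↔ rep c ⊆ relComp (rep a) (rep b)) ∧
      ((rep c ⊆ relComp (rep a) (rep b)) ↔ (rep c ∩ relComp (rep a) (rep b)).Nonempty))
/-- The atoms of the atom structure `Z`: identity atoms `id n i` (`i ≤ n`),
split atoms `r n k` and their converses `rc n k` (`1 ≤ k ≤ n`), and
atoms `w n i m j` (`i ≤ n`, `j ≤ m`).  Distinct constructor applications give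
pairwise distinct elements. -/
inductive Atom : Type
  | id : (n i : ℕ) → i ≤ n → Atom
  | r : (n k : ℕ) → 1 ≤ k → k ≤ n → Atom
  | rc : (n k : ℕ) → 1 ≤ k → k ≤ n → Atom
  | w : (n i m j : ℕ) → i ≤ n → j ≤ m → Atom

/-- The domain function of `Z`. -/
def Atom.dom : Atom → Atom
  | .id n i h => .id n i h
  | .r n _ _ _ => .id n 0 (Nat.zero_le n)
  | .rc n k _ h2 => .id n k h2
  | .w n i _ _ hi _ => .id n i hi

/-- The range function of `Z`. -/
def Atom.rg : Atom → Atom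
  | .id n i h => .id n i h
  | .r n k _ h2 => .id n k h2
  | .rc n _ _ _ => .id n 0 (Nat.zero_le n)
  | .w _ _ m j _ hj => .id m j hj

/-- Membership in the set `I` of identity atoms of `Z`. -/
def Atom.isId : Atom → Prop
  | .id _ _ _ => True
  | _ => False

/-- The converse function on atoms of `Z`. -/
def Atom.cnv : Atom → Atom
  | .id n i h => .id n i h
  | .r n k h1 h2 => .rc n k h1 h2
  | .rc n k h1 h2 => .r n k h1 h2
  | .w n i m j hi hj => .w m j n i hj hi

/-- The binary relation `C` of `Z`: it consists of the pairs `(x,x)` for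
`x ∈ I`, `(r n k, rc n k)`, `(rc n k, r n k)` and `(w n i m j, w m j n i)`,
i.e. exactly the pairs `(a, cnv a)`. -/
def Crel (a b : Atom) : Prop := b = Atom.cnv a

/-- The ternary relation `P` of `Z`: the triples `(dom a, a, a)` and
`(a, rg a, a)` for `a ∈ S`, the triples `(a, b, dom a)` for `(a,b) ∈ C`, and
the triples `(a,b,c)` of non-identity atoms with `dom a = dom c`,
`rg a = dom b`, `rg b = rg c`. -/
def Prel (a b c : Atom) : Prop :=
  (a = b.dom ∧ c = b) ∨
  (b = a.rg ∧ c = a) ∨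
  (Crel a b ∧ c = a.dom) ∨
  (¬ a.isId ∧ ¬ b.isId ∧ ¬ c.isId ∧ a.dom = c.dom ∧ a.rg = b.dom ∧ b.rg = c.rg)

/-- `Z` as a structure for the language `atomLang`. -/
instance atomStructureZ : atomLang.Structure Atom where
  funMap := fun {_} f _ => f.elim
  RelMap := fun {_} r v =>
    match r with
    | AtomRel.I => (v 0).isId
    | AtomRel.C => Crel (v 0) (v 1)
    | AtomRel.P => Prel (v 0) (v 1) (v 2)

/-- `X ⊆ S` splits the pair `(x,y)` if there are `a ∈ X` and `b ∉ X` with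
`dom a = dom b = x` and `rg a = rg b = y`. -/
def Splits (X : Set Atom) (x y : Atom) : Prop :=
  ∃ a ∈ X, ∃ b ∉ X, a.dom = x ∧ a.rg = y ∧ b.dom = x ∧ b.rg = y

/-- The pair `(x,y)` is splitable if `x ≠ y` and there are two distinct
elements `a ≠ b` of `S` with `dom a = dom b = x` and `rg a = rg b = y`. -/
def Splitable (x y : Atom) : Prop :=
  x ≠ y ∧ ∃ a b : Atom, a ≠ b ∧ a.dom = x ∧ a.rg = y ∧ b.dom = x ∧ b.rg = y

/-! If `A` consists of identity atoms, then `A;B` is the set of atoms of `B` whose domain lies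
in `A`. Such a restriction keeps or discards all atoms from `x` to `y` together, so it creates no
splitting that `B` does not already have. The case `B ⊆ I` is the same with ranges. -/

theorem mP_iff_prel {a b c : Atom} : mP a b c ↔ Prel a b c := Iff.rfl

namespace Atom

variable {a b c : Atom}

theorem isId.dom_eq (ha : a.isId) : a.dom = a := by
  cases a <;> first | rfl | exact ha.elim

theorem isId.rg_eq (ha : a.isId) : a.rg = a := by
  cases a <;> first | rfl | exact ha.elim

theorem isId.cnv_eq (ha : a.isId) : a.cnv = a := by
  cases a <;> first | rfl | exact ha.elim

theorem isId_cnv_iff : a.cnv.isId ↔ a.isId := by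
  cases a <;> rfl

theorem isId.mP_left_iff (ha : a.isId) : mP a b c ↔ a = b.dom ∧ c = b := by
  rw [mP_iff_prel]
  constructor
  · rintro (h | ⟨rfl, rfl⟩ | ⟨rfl, rfl⟩ | ⟨hna, -⟩)
    · exact h
    · simp only [ha.rg_eq, ha.dom_eq, and_self]
    · simp only [ha.cnv_eq, ha.dom_eq, and_self]
    · exact absurd ha hna
  · exact Or.inl

theorem isId.mP_right_iff (hb : b.isId) : mP a b c ↔ b = a.rg ∧ c = a := by
  rw [mP_iff_prel]
  constructor
  · rintro (⟨rfl, rfl⟩ | h | ⟨rfl, rfl⟩ | ⟨-, hnb, -⟩)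
    · simp only [hb.dom_eq, hb.rg_eq, and_self]
    · exact h
    · have ha : a.isId := isId_cnv_iff.mp hb
      simp only [ha.cnv_eq, ha.dom_eq, ha.rg_eq, and_self]
    · exact absurd hb hnb
  · exact fun h => Or.inr (Or.inl h)

end Atom

section

variable {A B : Set Atom}

theorem sComp_eq_inter_preimage_dom (hA : ∀ a ∈ A, a.isId) :
    sComp A B = B ∩ Atom.dom ⁻¹' A := by
  ext u
  constructor
  · rintro ⟨a, ha, b, hb, h⟩
    obtain ⟨rfl, rfl⟩ := (hA a ha).mP_left_iff.mp h
    exact ⟨hb, ha⟩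
  · rintro ⟨hu, hdom⟩
    exact ⟨u.dom, hdom, u, hu, (hA _ hdom).mP_left_iff.mpr ⟨rfl, rfl⟩⟩

theorem sComp_eq_inter_preimage_rg (hB : ∀ b ∈ B, b.isId) :
    sComp A B = A ∩ Atom.rg ⁻¹' B := by
  ext u
  constructor
  · rintro ⟨a, ha, b, hb, h⟩
    obtain ⟨rfl, rfl⟩ := (hB b hb).mP_right_iff.mp h
    exact ⟨ha, hb⟩
  · rintro ⟨hu, hrg⟩
    exact ⟨u, hu, u.rg, hrg, (hB _ hrg).mP_right_iff.mpr ⟨rfl, rfl⟩⟩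

end

namespace Splits

variable {X A B : Set Atom} {x y : Atom}

theorem of_inter {T : Set Atom}
    (hT : ∀ a ∈ T, ∀ b : Atom, a.dom = b.dom → a.rg = b.rg → b ∈ T)
    (h : Splits (X ∩ T) x y) : Splits X x y := by
  obtain ⟨a, ⟨haX, haT⟩, b, hb, hax, hay, hbx, hby⟩ := h
  have hbT : b ∈ T := hT a haT b (hax.trans hbx.symm) (hay.trans hby.symm)
  exact ⟨a, haX, b, fun hbX => hb ⟨hbX, hbT⟩, hax, hay, hbx, hby⟩

theorem right_of_sComp (hA : ∀ a ∈ A, a.isId) (h : Splits (sComp A B) x y) : Splits B x y := by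
  rw [sComp_eq_inter_preimage_dom hA] at h
  exact h.of_inter fun _ ha _ hdom _ => Set.mem_preimage.mpr (hdom ▸ ha)

theorem left_of_sComp (hB : ∀ b ∈ B, b.isId) (h : Splits (sComp A B) x y) : Splits A x y := by
  rw [sComp_eq_inter_preimage_rg hB] at h
  exact h.of_inter fun _ ha _ _ hrg => Set.mem_preimage.mpr (hrg ▸ ha)

end Splits

/-- In `Z`, for all `A ⊆ I`, `B ⊆ S`, and distinct `x, y ∈ I`: if `A;B` splits
the pair `(x,y)`, then `B` splits `(x,y)`.  Similarly, for all `A ⊆ S`,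
`B ⊆ I`, and distinct `x, y ∈ I`: if `A;B` splits `(x,y)`, then `A` splits
`(x,y)`. -/
theorem stmt_3 :
    (∀ (A B : Set Atom), (∀ a ∈ A, a.isId) →
      ∀ x y : Atom, x.isId → y.isId → x ≠ y →
        Splits (sComp A B) x y → Splits B x y) ∧
    (∀ (A B : Set Atom), (∀ b ∈ B, b.isId) →
      ∀ x y : Atom, x.isId → y.isId → x ≠ y →
        Splits (sComp A B) x y → Splits A x y) :=
  ⟨fun _ _ hA _ _ _ _ _ => Splits.right_of_sComp hA,
    fun _ _ hB _ _ _ _ _ => Splits.left_of_sComp hB⟩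
end

section
/- Every member X of the term algebra of Z splits only finitely many pairs (x,y) of distinct elements of I. -/
open FirstOrder FirstOrder.Language

/-!
Call two atoms parallel if they have the same domain and the same range. In `Z`, two parallel atoms
outside `I` are third components of the same triples of `P`, apart from the triples `(dom a, a, a)`
and `(a, rg a, a)`. Hence a pair of distinct identity atoms that `X ; Y` splits is already split by
`X` or by `Y`. The other operations create no new split pairs either, up to reversing the pairs in
the case of converse, and each generator splits at most one pair, so finiteness is preserved
throughout the term algebra.
-/

section SplitPairs

variable {M V : Type*} {ends : M → V × V} {X Y : Set M}

/-- The pairs of distinct points `(x, y)` split by `X`, where `ends a` is the pair consisting of the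
source and the target of `a`: some element of `X` and some element outside `X` both go from `x` to
`y`. -/
def splitPairs (ends : M → V × V) (X : Set M) : Set (V × V) :=
  (ends '' X ∩ ends '' Xᶜ) \ Set.diagonal V

theorem splitPairs_singleton_subset (a : M) : splitPairs ends {a} ⊆ {ends a} := by
  rintro _ ⟨⟨⟨_, rfl, rfl⟩, -⟩, -⟩
  rfl

theorem splitPairs_compl : splitPairs ends Xᶜ = splitPairs ends X := by
  rw [splitPairs, splitPairs, compl_compl, Set.inter_comm]

theorem splitPairs_union_subset :
    splitPairs ends (X ∪ Y) ⊆ splitPairs ends X ∪ splitPairs ends Y := by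
  rintro _ ⟨⟨⟨a, ha, rfl⟩, b, hb, hab⟩, hne⟩
  rw [Set.compl_union] at hb
  exact ha.imp (fun haX => ⟨⟨⟨a, haX, rfl⟩, b, hb.1, hab⟩, hne⟩)
    (fun haY => ⟨⟨⟨a, haY, rfl⟩, b, hb.2, hab⟩, hne⟩)

end SplitPairs

/-- An atom structure whose atoms are the edges of a directed multigraph, with `ends a` the source
and target of `a`, such that `I` consists of loops, `C` reverses edges and reaches every edge, and
any two parallel non-loops are interchangeable as third argument of `P`. When the third argument is
also one of the first two, as in `(dom a, a, a)` and `(a, rg a, a)`, `mP_parallel` allows exchanging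
both occurrences. -/
structure IsParallelUniform {M : Type} [atomLang.Structure M] {V : Type*}
    (ends : M → V × V) : Prop where
  ends_mem_diagonal {a : M} : mI a → ends a ∈ Set.diagonal V
  exists_mC (b : M) : ∃ a, mC a b
  ends_of_mC {a b : M} : mC a b → ends a = (ends b).swap
  mP_parallel {p q a b : M} : ends a ∉ Set.diagonal V → ends b = ends a → mP p q a →
    mP p q b ∨ p = a ∧ mP b q b ∨ q = a ∧ mP p b b

namespace IsParallelUniform

variable {M : Type} [atomLang.Structure M] {V : Type*} {ends : M → V × V} {X Y : Set M}

theorem splitPairs_idSet (h : IsParallelUniform ends) : splitPairs ends (idSet M) = ∅ := by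
  refine Set.eq_empty_of_forall_notMem ?_
  rintro _ ⟨⟨⟨a, ha, rfl⟩, -⟩, hne⟩
  exact hne (h.ends_mem_diagonal ha)

theorem splitPairs_sConv_subset (h : IsParallelUniform ends) :
    splitPairs ends (sConv X) ⊆ Prod.swap ⁻¹' splitPairs ends X := by
  rintro _ ⟨⟨⟨a, ⟨a', ha', haC⟩, rfl⟩, b, hb, hab⟩, hne⟩
  obtain ⟨b', hbC⟩ := h.exists_mC b
  have hb' : b' ∉ X := fun hb' => hb ⟨b', hb', hbC⟩
  exact ⟨⟨⟨a', ha', h.ends_of_mC haC⟩, b', hb', by rw [h.ends_of_mC hbC, hab]⟩,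
    fun hdiag => hne (Eq.symm hdiag)⟩

theorem splitPairs_sComp_subset (h : IsParallelUniform ends) :
    splitPairs ends (sComp X Y) ⊆ splitPairs ends X ∪ splitPairs ends Y := by
  rintro _ ⟨⟨⟨a, ⟨p, hp, q, hq, haP⟩, rfl⟩, b, hb, hab⟩, hne⟩
  rcases h.mP_parallel hne hab haP with hbP | ⟨rfl, hbP⟩ | ⟨rfl, hbP⟩
  · exact absurd ⟨p, hp, q, hq, hbP⟩ hb
  · have hbX : b ∉ X := fun hbX => hb ⟨b, hbX, q, hq, hbP⟩
    exact Or.inl ⟨⟨⟨p, hp, rfl⟩, b, hbX, hab⟩, hne⟩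
  · have hbY : b ∉ Y := fun hbY => hb ⟨p, hp, b, hbY, hbP⟩
    exact Or.inr ⟨⟨⟨q, hq, rfl⟩, b, hbY, hab⟩, hne⟩

end IsParallelUniform

theorem stmt_4_general {M : Type} [atomLang.Structure M] {V : Type*} {ends : M → V × V}
    (h : IsParallelUniform ends) {X : Set M} (hX : InTA M X) : (splitPairs ends X).Finite := by
  induction hX with
  | sing a => exact (Set.finite_singleton (ends a)).subset (splitPairs_singleton_subset a)
  | idset => exact h.splitPairs_idSet ▸ Set.finite_empty
  | union _ _ ihX ihY => exact (ihX.union ihY).subset splitPairs_union_subset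
  | compl _ ih => rwa [splitPairs_compl]
  | comp _ _ ihX ihY => exact (ihX.union ihY).subset h.splitPairs_sComp_subset
  | conv _ ih =>
    exact (ih.preimage Prod.swap_injective.injOn).subset h.splitPairs_sConv_subset

namespace Atom

/-- The pair of the domain and the range of an atom of `Z`, which makes the atoms the edges of a
directed multigraph on the identity atoms. -/
def ends (a : Atom) : Atom × Atom := (a.dom, a.rg)

theorem isId_dom (a : Atom) : a.dom.isId := by cases a <;> trivial

theorem isId.dom_eq_rg {a : Atom} (ha : a.isId) : a.dom = a.rg := by
  cases a <;> first | rfl | exact ha.elim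

theorem cnv_cnv (a : Atom) : a.cnv.cnv = a := by cases a <;> rfl

theorem ends_cnv (a : Atom) : a.cnv.ends = a.ends.swap := by cases a <;> rfl

theorem prel_parallel {p q a b : Atom} (ha : ¬ a.isId) (hb : ¬ b.isId)
    (hdom : b.dom = a.dom) (hrg : b.rg = a.rg) (hP : Prel p q a) :
    Prel p q b ∨ p = a ∧ Prel b q b ∨ q = a ∧ Prel p b b := by
  rcases hP with ⟨hp, rfl⟩ | ⟨hq, rfl⟩ | ⟨-, rfl⟩ | ⟨hp, hq, -, hpa, hpq, hqa⟩
  · exact Or.inr (Or.inr ⟨rfl, Or.inl ⟨hp.trans hdom.symm, rfl⟩⟩)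
  · exact Or.inr (Or.inl ⟨rfl, Or.inr (Or.inl ⟨hq.trans hrg.symm, rfl⟩)⟩)
  · exact absurd p.isId_dom ha
  · exact Or.inl (Or.inr (Or.inr (Or.inr
      ⟨hp, hq, hb, hpa.trans hdom.symm, hpq, hqa.trans hrg.symm⟩)))

theorem isParallelUniform_ends : IsParallelUniform ends where
  ends_mem_diagonal ha := isId.dom_eq_rg ha
  exists_mC b := ⟨b.cnv, b.cnv_cnv.symm⟩
  ends_of_mC {a b} hC := by
    have hb : b = a.cnv := hC
    rw [hb, ends_cnv, Prod.swap_swap]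
  mP_parallel {p q a b} hne hab := by
    have ha : ¬ a.isId := fun ha => hne ha.dom_eq_rg
    have hb : ¬ b.isId := fun hb => hne (hab ▸ hb.dom_eq_rg)
    exact prel_parallel ha hb (congrArg Prod.fst hab) (congrArg Prod.snd hab)

end Atom

theorem Splits.mem_splitPairs {X : Set Atom} {x y : Atom} (hX : Splits X x y) (hne : x ≠ y) :
    (x, y) ∈ splitPairs Atom.ends X := by
  obtain ⟨a, ha, b, hb, rfl, rfl, hdom, hrg⟩ := hX
  exact ⟨⟨⟨a, ha, rfl⟩, b, hb, Prod.ext hdom hrg⟩, hne⟩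

/-- Every member `X` of the term algebra of `Z` splits only finitely many
pairs `(x,y)` of distinct elements of `I`. -/
theorem stmt_4 (X : Set Atom) (hX : InTA Atom X) :
    {p : Atom × Atom | p.1.isId ∧ p.2.isId ∧ p.1 ≠ p.2 ∧ Splits X p.1 p.2}.Finite :=
  (stmt_4_general Atom.isParallelUniform_ends hX).subset
    fun _ ⟨_, _, hne, hsplit⟩ => hsplit.mem_splitPairs hne
end

section
/- For every x ∈ I there exists a member X of the term algebra of Z such that for every y ∈ I, if the pair (x,y) is splitable, then X splits (x,y). -/
open FirstOrder FirstOrder.Language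

/-!
Call `n` the level of the identity atom `id n i`. Two identity atoms on different levels are joined
by a single `w`-atom, so a pair `(x, y)` can only be splitable when `y` lies on the level of `x`,
and each level is finite. Choosing for each such `y` one of the atoms from `x` to `y` gives a finite
set that splits all these pairs, and finite sets belong to the term algebra.
-/

theorem InTA.empty (M : Type) [atomLang.Structure M] : InTA M ∅ := by
  simpa using (InTA.idset.union InTA.idset.compl : InTA M _).compl

theorem InTA.of_finite {M : Type} [atomLang.Structure M] {X : Set M} (hX : X.Finite) :
    InTA M X := by
  induction X, hX using Set.Finite.induction_on with
  | empty => exact InTA.empty M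
  | insert _ _ hX => exact (InTA.sing _).union hX

theorem exists_finite_forall_splits {x : Atom} (hx : {y | Splitable x y}.Finite) :
    ∃ X : Set Atom, X.Finite ∧ ∀ y, Splitable x y → Splits X x y := by
  choose! a b hab ha_dom ha_rg hb_dom hb_rg using fun y (hy : Splitable x y) => hy.2
  refine ⟨a '' {y | Splitable x y}, hx.image a, fun y hy =>
    ⟨a y, Set.mem_image_of_mem a hy, b y, ?_, ha_dom y hy, ha_rg y hy, hb_dom y hy, hb_rg y hy⟩⟩
  rintro ⟨z, hz, haz⟩
  obtain rfl : z = y := by rw [← ha_rg z hz, haz, hb_rg y hy]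
  exact hab z hz haz

namespace Atom

theorem isId_iff_exists {a : Atom} : a.isId ↔ ∃ n i, ∃ hi : i ≤ n, a = .id n i hi := by
  cases a <;> simp [isId, *]

theorem isId_rg (a : Atom) : a.rg.isId := by
  cases a <;> trivial

theorem eq_w_of_ne {a : Atom} {n i m j : ℕ} {hi : i ≤ n} {hj : j ≤ m} (hnm : n ≠ m)
    (h_dom : a.dom = .id n i hi) (h_rg : a.rg = .id m j hj) : a = .w n i m j hi hj := by
  cases a <;> grind [dom, rg]

end Atom

theorem Splitable.level_eq {n i m j : ℕ} {hi : i ≤ n} {hj : j ≤ m}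
    (h : Splitable (.id n i hi) (.id m j hj)) : n = m := by
  obtain ⟨-, a, b, hab, ha_dom, ha_rg, hb_dom, hb_rg⟩ := h
  by_contra hnm
  exact hab ((Atom.eq_w_of_ne hnm ha_dom ha_rg).trans (Atom.eq_w_of_ne hnm hb_dom hb_rg).symm)

theorem Splitable.isId_right {x y : Atom} (h : Splitable x y) : y.isId := by
  obtain ⟨-, a, -, -, -, rfl, -⟩ := h
  exact a.isId_rg

theorem finite_setOf_splitable_id {n i : ℕ} (hi : i ≤ n) :
    {y | Splitable (.id n i hi) y}.Finite := by
  refine (Set.finite_range fun k : Fin (n + 1) => Atom.id n k (Nat.le_of_lt_succ k.2)).subset ?_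
  intro y hy
  obtain ⟨m, j, hj, rfl⟩ := Atom.isId_iff_exists.mp hy.isId_right
  obtain rfl := hy.level_eq
  exact ⟨⟨j, Nat.lt_succ_of_le hj⟩, rfl⟩

/-- For every `x ∈ I` there exists a member `X` of the term algebra of `Z`
such that for every `y ∈ I`, if the pair `(x,y)` is splitable, then `X`
splits `(x,y)`. -/
theorem stmt_5 (x : Atom) (hx : x.isId) :
    ∃ X : Set Atom, InTA Atom X ∧
      ∀ y : Atom, y.isId → Splitable x y → Splits X x y := by
  obtain ⟨n, i, hi, rfl⟩ := Atom.isId_iff_exists.mp hx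
  obtain ⟨X, hX, hsplits⟩ := exists_finite_forall_splits (finite_setOf_splitable_id hi)
  exact ⟨X, InTA.of_finite hX, fun y _ => hsplits y⟩
end

section
/- Let k ≥ 1. For every v ∈ ℕ and every X ∈ {R_k, T_k}, there exist at least two distinct u ∈ ℕ with (u,v) ∈ X. -/
/-- For `k ≥ 1`, the relation `R_k ⊆ ℕ × ℕ`: `(u,v) ∈ R_k` iff
`v = 2^u·3^j` or `v = 2^j·3^u` for some `j`, or `u = 2^v·3^j` or `u = 2^j·3^v`
for some `j`, or `u = 2^v·5^k`. -/
def Rk (k : ℕ) : Set (ℕ × ℕ) :=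
  {p | (∃ j : ℕ, p.2 = 2 ^ p.1 * 3 ^ j ∨ p.2 = 2 ^ j * 3 ^ p.1) ∨
       (∃ j : ℕ, p.1 = 2 ^ p.2 * 3 ^ j ∨ p.1 = 2 ^ j * 3 ^ p.2) ∨
       p.1 = 2 ^ p.2 * 5 ^ k}

/-- `T_k = (ℕ × ℕ) ∖ R_k`. -/
def Tk (k : ℕ) : Set (ℕ × ℕ) := (Rk k)ᶜ

/-!
Every `2 ^ v * 3 ^ j` is related to `v`. Conversely, a `u > v` related to `v` has no prime factor
other than `2`, `3` and `5`, because `v = 2 ^ u * 3 ^ j` and `v = 2 ^ j * 3 ^ u` force `u < v`.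
Hence all large primes are unrelated to `v`.
-/

theorem lt_pow_self_mul {a b : ℕ} (ha : 1 < a) (hb : 0 < b) (n : ℕ) : n < a ^ n * b :=
  (Nat.lt_pow_self ha).trans_le (Nat.le_mul_of_pos_right _ hb)

theorem prime_le_of_dvd_pow_mul_pow {p a b N m n : ℕ} (hp : p.Prime) (ha : 0 < a) (hb : 0 < b)
    (haN : a ≤ N) (hbN : b ≤ N) (h : p ∣ a ^ m * b ^ n) : p ≤ N := by
  rcases hp.dvd_mul.mp h with h | h
  · exact (Nat.le_of_dvd ha (hp.dvd_of_dvd_pow h)).trans haN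
  · exact (Nat.le_of_dvd hb (hp.dvd_of_dvd_pow h)).trans hbN

theorem two_pow_mul_three_pow_mem_Rk (k v j : ℕ) : (2 ^ v * 3 ^ j, v) ∈ Rk k :=
  Or.inr (Or.inl ⟨j, Or.inl rfl⟩)

theorem prime_le_five_of_dvd_of_mem_Rk {k u v p : ℕ} (h : (u, v) ∈ Rk k) (hvu : v < u)
    (hp : p.Prime) (hpu : p ∣ u) : p ≤ 5 := by
  rcases h with ⟨j, hv | hv⟩ | ⟨j, hu | hu⟩ | hu
  · have huv : u < v := (lt_pow_self_mul (by norm_num) (by positivity) u).trans_eq hv.symm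
    exact absurd huv hvu.asymm
  · have huv : u < v :=
      (lt_pow_self_mul (by norm_num) (by positivity) u).trans_eq ((mul_comm _ _).trans hv.symm)
    exact absurd huv hvu.asymm
  all_goals
    exact prime_le_of_dvd_pow_mul_pow hp (by norm_num) (by norm_num) (by norm_num) (by norm_num)
      (hpu.trans hu.dvd)

theorem prime_mem_Tk {k p v : ℕ} (hp : p.Prime) (hp5 : 5 < p) (hvp : v < p) : (p, v) ∈ Tk k :=
  fun h => hp5.not_ge (prime_le_five_of_dvd_of_mem_Rk h hvp hp dvd_rfl)

theorem infinite_setOf_mem_Rk (k v : ℕ) : {u | (u, v) ∈ Rk k}.Infinite := by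
  have hinj : Function.Injective fun j : ℕ => 2 ^ v * 3 ^ j :=
    (mul_right_injective₀ (by positivity)).comp (Nat.pow_right_injective (by norm_num))
  exact Set.infinite_of_injective_forall_mem hinj (two_pow_mul_three_pow_mem_Rk k v)

theorem infinite_setOf_mem_Tk (k v : ℕ) : {u | (u, v) ∈ Tk k}.Infinite := by
  refine Set.infinite_of_forall_exists_gt fun n => ?_
  obtain ⟨p, hle, hp⟩ := Nat.exists_infinite_primes (n + v + 6)
  exact ⟨p, prime_mem_Tk hp (by lia) (by lia), by lia⟩

/-- For `k ≥ 1`, every `v ∈ ℕ` and every `X ∈ {R_k, T_k}`, there are at least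
two distinct `u` with `(u,v) ∈ X`. -/
theorem stmt_11 (k : ℕ) (hk : 1 ≤ k) (v : ℕ)
    (X : Set (ℕ × ℕ)) (hX : X = Rk k ∨ X = Tk k) :
    ∃ u u' : ℕ, u ≠ u' ∧ (u, v) ∈ X ∧ (u', v) ∈ X := by
  have hinf : {u | (u, v) ∈ X}.Infinite := by
    rcases hX with rfl | rfl
    · exact infinite_setOf_mem_Rk k v
    · exact infinite_setOf_mem_Tk k v
  obtain ⟨u, hu, u', hu', hne⟩ := hinf.nontrivial
  exact ⟨u, u', hne, hu, hu'⟩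
end

section
/- Let D be a nonprincipal ultrafilter on ℕ, let Z' = ⟨S', P', C', I'⟩ be the ultrapower of Z with respect to D, and let x be the equivalence class modulo D of the sequence (id_{n,0})_{n∈ℕ}. Then x ∈ I', the set of y ∈ I' such that the pair (x,y) is splitable is infinite, and there is no member X of the term algebra of Z' such that X splits (x,y) for every y ∈ I' for which (x,y) is splitable. -/
open FirstOrder FirstOrder.Language

/-- The ultrapower `Z'` of the atom structure `Z` with respect to an
ultrafilter `D` on `J`. -/
def UPow (J : Type) (D : Ultrafilter J) : Type :=
  (D : Filter J).Product (fun _ : J => Atom)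

/-- The ultraproduct structure on the ultrapower of `Z`. -/
instance uPowStructure (J : Type) (D : Ultrafilter J) : atomLang.Structure (UPow J D) :=
  inferInstanceAs (atomLang.Structure ((D : Filter J).Product fun _ : J => Atom))

/-!
Every member of the term algebra is invariant under the automorphisms that fix pointwise a suitable
finite set `F`. For each `k ≥ 1`, interchanging `r n k` with `w n 0 n k`, the only two atoms going
from `id n 0` to `id n k`, and likewise their converses, is an automorphism of `Z`. It induces an
automorphism `σ k` of the ultrapower, which interchanges the two elements going from `x` to the
class `y k` of `(id n k)`. As no atom is moved for two values of `k`, neither is any element of the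
ultrapower, so some `σ k` fixes all of `F`; the member of the term algebra with support `F` is
invariant under that `σ k` and hence cannot split `(x, y k)`.
-/

section Automorphism

variable {M N : Type} [atomLang.Structure M] [atomLang.Structure N]

theorem mI_map_iff (σ : M ≃[atomLang] N) {a : M} : mI (σ a) ↔ mI a := by
  have h := σ.map_rel AtomRel.I ![a]
  rwa [← FinVec.map_eq] at h

theorem mC_map_iff (σ : M ≃[atomLang] N) {a b : M} : mC (σ a) (σ b) ↔ mC a b := by
  have h := σ.map_rel AtomRel.C ![a, b]
  rwa [← FinVec.map_eq] at h

theorem mP_map_iff (σ : M ≃[atomLang] N) {a b c : M} :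
    mP (σ a) (σ b) (σ c) ↔ mP a b c := by
  have h := σ.map_rel AtomRel.P ![a, b, c]
  rwa [← FinVec.map_eq] at h

theorem image_idSet (σ : M ≃[atomLang] N) : σ '' idSet M = idSet N := by
  ext u
  obtain ⟨u, rfl⟩ := σ.surjective u
  simp [idSet, mI_map_iff]

theorem image_sComp (σ : M ≃[atomLang] N) (X Y : Set M) :
    σ '' sComp X Y = sComp (σ '' X) (σ '' Y) := by
  ext u
  obtain ⟨u, rfl⟩ := σ.surjective u
  simp [sComp, mP_map_iff]

theorem image_sConv (σ : M ≃[atomLang] N) (X : Set M) : σ '' sConv X = sConv (σ '' X) := by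
  ext u
  obtain ⟨u, rfl⟩ := σ.surjective u
  simp [sConv, mC_map_iff]

end Automorphism

section TermAlgebra

variable {M : Type} [atomLang.Structure M] {X : Set M}

theorem InTA.exists_finite_support (hX : InTA M X) :
    ∃ F : Set M, F.Finite ∧ ∀ σ : M ≃[atomLang] M, (∀ a ∈ F, σ a = a) → σ '' X = X := by
  induction hX with
  | sing a => exact ⟨{a}, Set.finite_singleton a, fun σ hσ => by simp [hσ a rfl]⟩
  | idset => exact ⟨∅, Set.finite_empty, fun σ _ => image_idSet σ⟩
  | union _ _ ihX ihY =>
    obtain ⟨F, hF, hX⟩ := ihX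
    obtain ⟨G, hG, hY⟩ := ihY
    refine ⟨F ∪ G, hF.union hG, fun σ hσ => ?_⟩
    rw [Set.image_union, hX σ fun a ha => hσ a (.inl ha), hY σ fun a ha => hσ a (.inr ha)]
  | compl _ ih =>
    obtain ⟨F, hF, hX⟩ := ih
    refine ⟨F, hF, fun σ hσ => ?_⟩
    rw [Set.image_compl_eq σ.bijective, hX σ hσ]
  | comp _ _ ihX ihY =>
    obtain ⟨F, hF, hX⟩ := ihX
    obtain ⟨G, hG, hY⟩ := ihY
    refine ⟨F ∪ G, hF.union hG, fun σ hσ => ?_⟩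
    rw [image_sComp, hX σ fun a ha => hσ a (.inl ha), hY σ fun a ha => hσ a (.inr ha)]
  | conv _ ih =>
    obtain ⟨F, hF, hX⟩ := ih
    exact ⟨F, hF, fun σ hσ => by rw [image_sConv, hX σ hσ]⟩

/-- `σ` exchanges the elements going from `x` to `y`: it sends each of them to any other one, so
that there are at most two of them. -/
def Exchanges (σ : M → M) (x y : M) : Prop :=
  ∀ ⦃a b : M⦄, goes a x y → goes b x y → a ≠ b → σ a = b

theorem Exchanges.not_splitsG {σ : M → M} {x y : M} (hσ : Exchanges σ x y)
    (hX : σ '' X = X) : ¬ SplitsG X x y := by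
  rintro ⟨a, ha, b, hb, hax, hbx⟩
  have hab : σ a = b := hσ hax hbx (ne_of_mem_of_not_mem ha hb)
  exact hb (hX ▸ hab ▸ Set.mem_image_of_mem σ ha)

theorem InTA.exists_not_splitsG {ι : Type*} [Infinite ι] (hX : InTA M X)
    {σ : ι → M ≃[atomLang] M} (hmoved : ∀ a, {i | σ i a ≠ a}.Finite) {x y : ι → M}
    (hσ : ∀ i, Exchanges (σ i) (x i) (y i)) : ∃ i, ¬ SplitsG X (x i) (y i) := by
  obtain ⟨F, hF, hsupp⟩ := hX.exists_finite_support
  obtain ⟨i, hi⟩ := (hF.biUnion fun a _ => hmoved a).exists_notMem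
  simp only [Set.mem_iUnion, not_exists, Set.mem_ofPred_eq, not_not] at hi
  exact ⟨i, (hσ i).not_splitsG (hsupp (σ i) hi)⟩

end TermAlgebra

section Ultraproduct

variable {J : Type*} {M N : J → Type*}

/-- The class modulo `D` of an element of the product, as an element of the ultraproduct. -/
def ultraMk (D : Ultrafilter J) (f : ∀ j, M j) : (D : Filter J).Product M :=
  Quotient.mk _ f

theorem ultraMk_surjective (D : Ultrafilter J) : Function.Surjective (ultraMk (M := M) D) :=
  Quotient.exists_rep

theorem ultraMk_eq_iff {D : Ultrafilter J} {f g : ∀ j, M j} :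
    ultraMk D f = ultraMk D g ↔ ∀ᶠ j in (D : Filter J), f j = g j :=
  Quotient.eq (r := (D : Filter J).productSetoid M)

variable {L : FirstOrder.Language} [∀ j, L.Structure (M j)] [∀ j, L.Structure (N j)]

theorem relMap_ultraMk (D : Ultrafilter J) {n : ℕ} (r : L.Relations n) (v : Fin n → ∀ j, M j) :
    Structure.RelMap r (ultraMk D ∘ v) ↔
      ∀ᶠ j in (D : Filter J), Structure.RelMap r (Function.eval j ∘ v) :=
  relMap_quotient_mk' _ r v

theorem funMap_ultraMk (D : Ultrafilter J) {n : ℕ} (f : L.Functions n) (v : Fin n → ∀ j, M j) :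
    Structure.funMap f (ultraMk D ∘ v) =
      ultraMk D fun j => Structure.funMap f (Function.eval j ∘ v) :=
  funMap_quotient_mk' _ f v

/-- The isomorphism of ultraproducts induced by isomorphisms of the factors. -/
def ultraproductCongr (D : Ultrafilter J) (e : ∀ j, M j ≃[L] N j) :
    (D : Filter J).Product M ≃[L] (D : Filter J).Product N where
  toEquiv := Quotient.congr (Equiv.piCongrRight fun j => (e j).toEquiv) fun _ _ =>
    Filter.eventually_congr (.of_forall fun j => (e j).injective.eq_iff.symm)
  map_fun' f v := by
    obtain ⟨v, rfl⟩ := (ultraMk_surjective D).comp_left v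
    rw [funMap_ultraMk]
    refine Eq.trans ?_ (funMap_ultraMk D f fun i j => e j (v i j)).symm
    exact congrArg (ultraMk D) (funext fun j => (e j).map_fun f _)
  map_rel' r v := by
    obtain ⟨v, rfl⟩ := (ultraMk_surjective D).comp_left v
    rw [relMap_ultraMk]
    refine (relMap_ultraMk D r fun i j => e j (v i j)).trans ?_
    exact Filter.eventually_congr (.of_forall fun j => (e j).map_rel r _)

theorem ultraproductCongr_ultraMk (D : Ultrafilter J) (e : ∀ j, M j ≃[L] N j) (f : ∀ j, M j) :
    ultraproductCongr D e (ultraMk D f) = ultraMk D fun j => e j (f j) :=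
  rfl

theorem subsingleton_setOf_ultraproductCongr_ne {ι : Type*} {σ : ι → ∀ j, M j ≃[L] M j}
    (hσ : ∀ j (a : M j), {i | σ i j a ≠ a}.Subsingleton) (D : Ultrafilter J)
    (a : (D : Filter J).Product M) : {i | ultraproductCongr D (σ i) a ≠ a}.Subsingleton := by
  obtain ⟨f, rfl⟩ := ultraMk_surjective D a
  intro i hi i' hi'
  simp only [Set.mem_ofPred_eq, ne_eq, ultraproductCongr_ultraMk, ultraMk_eq_iff,
    ← Ultrafilter.eventually_not] at hi hi'
  obtain ⟨j, hj, hj'⟩ := (hi.and hi').exists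
  exact hσ j (f j) hj hj'

end Ultraproduct

section UltraproductGoes

variable {J : Type} {D : Ultrafilter J} {M : J → Type} [∀ j, atomLang.Structure (M j)]
  {a b c x y : ∀ j, M j}

theorem mI_ultraMk_iff : mI (ultraMk D a) ↔ ∀ᶠ j in (D : Filter J), mI (a j) := by
  have h := relMap_ultraMk (L := atomLang) D AtomRel.I ![a]
  simp only [← FinVec.map_eq] at h
  exact h

theorem mP_ultraMk_iff :
    mP (ultraMk D a) (ultraMk D b) (ultraMk D c) ↔
      ∀ᶠ j in (D : Filter J), mP (a j) (b j) (c j) := by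
  have h := relMap_ultraMk (L := atomLang) D AtomRel.P ![a, b, c]
  simp only [← FinVec.map_eq] at h
  exact h

theorem goes_ultraMk_iff :
    goes (ultraMk D a) (ultraMk D x) (ultraMk D y) ↔
      ∀ᶠ j in (D : Filter J), goes (a j) (x j) (y j) := by
  simp only [goes, mP_ultraMk_iff, Filter.eventually_and]

theorem splitableG_ultraMk (h : ∀ᶠ j in (D : Filter J), SplitableG (x j) (y j)) :
    SplitableG (ultraMk D x) (ultraMk D y) := by
  have : ∀ j, Nonempty (M j) := fun j => ⟨x j⟩
  obtain ⟨a, ha⟩ := Filter.skolem.mp (h.mono fun _ hj => hj.2)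
  obtain ⟨b, hab⟩ := Filter.skolem.mp ha
  simp only [Filter.eventually_and] at hab
  obtain ⟨hne, hax, hbx⟩ := hab
  refine ⟨?_, ultraMk D a, ultraMk D b, ?_, goes_ultraMk_iff.mpr hax, goes_ultraMk_iff.mpr hbx⟩
  · rw [ne_eq, ultraMk_eq_iff, ← Ultrafilter.eventually_not]
    exact h.mono fun _ hj => hj.1
  · rwa [ne_eq, ultraMk_eq_iff, ← Ultrafilter.eventually_not]

theorem exchanges_ultraproductCongr {σ : ∀ j, M j ≃[atomLang] M j}
    (h : ∀ᶠ j in (D : Filter J), Exchanges (σ j) (x j) (y j)) :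
    Exchanges (ultraproductCongr D σ) (ultraMk D x) (ultraMk D y) := by
  intro a b ha hb hab
  obtain ⟨a, rfl⟩ := ultraMk_surjective D a
  obtain ⟨b, rfl⟩ := ultraMk_surjective D b
  rw [goes_ultraMk_iff] at ha hb
  rw [ne_eq, ultraMk_eq_iff, ← Ultrafilter.eventually_not] at hab
  rw [ultraproductCongr_ultraMk, ultraMk_eq_iff]
  filter_upwards [h, ha, hb, hab] with j hσ haj hbj habj using hσ haj hbj habj

end UltraproductGoes

namespace Atom

theorem isId_id {n i : ℕ} {h : i ≤ n} : (id n i h).isId := trivial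

theorem dom_eq_self_iff {a : Atom} : a.dom = a ↔ a.isId :=
  ⟨fun h => h ▸ a.isId_dom, fun h => by cases a <;> trivial⟩

theorem rg_eq_self_iff {a : Atom} : a.rg = a ↔ a.isId :=
  ⟨fun h => h ▸ a.isId_rg, fun h => by cases a <;> trivial⟩

theorem dom_cnv (a : Atom) : a.cnv.dom = a.rg := by cases a <;> rfl

theorem prel_left_iff {x a : Atom} (hx : x.isId) : Prel x a a ↔ a.dom = x := by
  refine ⟨?_, fun h => .inl ⟨h.symm, rfl⟩⟩
  rintro (⟨h, -⟩ | ⟨-, rfl⟩ | ⟨-, rfl⟩ | ⟨h, -⟩)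
  · exact h.symm
  · exact dom_eq_self_iff.mpr hx
  · rw [dom_eq_self_iff.mpr x.isId_dom, dom_eq_self_iff.mpr hx]
  · exact absurd hx h

theorem prel_right_iff {y a : Atom} (hy : y.isId) : Prel a y a ↔ a.rg = y := by
  refine ⟨?_, fun h => .inr (.inl ⟨h.symm, rfl⟩)⟩
  rintro (⟨-, rfl⟩ | ⟨h, -⟩ | ⟨rfl, -⟩ | ⟨-, h, -⟩)
  · exact rg_eq_self_iff.mpr hy
  · exact h.symm
  · rw [← dom_cnv, dom_eq_self_iff.mpr hy]
  · exact absurd hy h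

theorem goes_iff {x y a : Atom} (hx : x.isId) (hy : y.isId) :
    goes a x y ↔ a.dom = x ∧ a.rg = y :=
  and_congr (prel_left_iff hx) (prel_right_iff hy)

/-- A permutation of the atoms of `Z` that fixes the identity atoms and respects domains and
converses, as an automorphism of `Z`. -/
def autOfPerm (e : Equiv.Perm Atom) (hid : ∀ a : Atom, a.isId → e a = a)
    (hdom : ∀ a, (e a).dom = a.dom) (hcnv : ∀ a : Atom, e a.cnv = (e a).cnv) :
    Atom ≃[atomLang] Atom where
  toEquiv := e
  map_fun' f := nomatch f
  map_rel' r v := by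
    have apply_eq_iff {a b : Atom} (hb : b.isId) : e a = b ↔ a = b := by
      simpa only [hid b hb] using e.injective.eq_iff (a := a) (b := b)
    have hrg (a : Atom) : (e a).rg = a.rg := by rw [← dom_cnv, ← hcnv, hdom, dom_cnv]
    have hisId (a : Atom) : (e a).isId ↔ a.isId := by
      rw [← dom_eq_self_iff, hdom, eq_comm, apply_eq_iff a.isId_dom, eq_comm, dom_eq_self_iff]
    cases r with
    | I => exact hisId (v 0)
    | C =>
      change Crel (e (v 0)) (e (v 1)) ↔ Crel (v 0) (v 1)
      simp only [Crel, ← hcnv, e.injective.eq_iff]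
    | P =>
      change Prel (e (v 0)) (e (v 1)) (e (v 2)) ↔ Prel (v 0) (v 1) (v 2)
      simp only [Prel, Crel, hdom, hrg, hisId, ← hcnv, e.injective.eq_iff,
        apply_eq_iff (isId_dom _), apply_eq_iff (isId_rg _)]

/-- The involution of the atoms of `Z` that exchanges `r n k` with `w n 0 n k` and `rc n k` with
`w n k n 0`, for every `n ≥ k`. -/
def exchange (k : ℕ+) : Atom → Atom
  | .id n i h => .id n i h
  | .r n i h1 h2 => if i = k then .w n 0 n i n.zero_le h2 else .r n i h1 h2
  | .rc n i h1 h2 => if i = k then .w n i n 0 h2 n.zero_le else .rc n i h1 h2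
  | .w n i m j hi hj =>
      if h : n = m ∧ i = 0 ∧ j = k then .r m j (h.2.2 ▸ k.pos) hj
      else if h : n = m ∧ i = k ∧ j = 0 then .rc n i (h.2.1 ▸ k.pos) hi
      else .w n i m j hi hj

theorem exchange_involutive (k : ℕ+) : Function.Involutive (exchange k) := by
  intro a
  have hk := k.pos
  cases a <;> simp only [exchange] <;> grind [exchange]

theorem exchange_dom (k : ℕ+) (a : Atom) : (exchange k a).dom = a.dom := by
  cases a <;> simp only [exchange] <;> grind [dom]

theorem exchange_cnv (k : ℕ+) (a : Atom) : exchange k a.cnv = (exchange k a).cnv := by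
  have hk := k.pos
  cases a <;> simp only [exchange, cnv] <;> grind [cnv]

theorem exchange_of_isId (k : ℕ+) {a : Atom} (ha : a.isId) : exchange k a = a := by
  cases a <;> trivial

theorem subsingleton_setOf_exchange_ne (a : Atom) : {k | exchange k a ≠ a}.Subsingleton := by
  intro k hk k' hk'
  apply PNat.coe_injective
  cases a <;> simp only [exchange, Set.mem_ofPred_eq] at hk hk' <;> grind

/-- The automorphism of `Z` given by `exchange k`. -/
def exchangeAut (k : ℕ+) : Atom ≃[atomLang] Atom :=
  autOfPerm (exchange_involutive k).toPerm (fun _ => exchange_of_isId k) (exchange_dom k)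
    (exchange_cnv k)

theorem eq_r_or_eq_w {n k : ℕ} (hk : 1 ≤ k) (hkn : k ≤ n) {a : Atom}
    (h : goes a (.id n 0 n.zero_le) (.id n k hkn)) :
    a = .r n k hk hkn ∨ a = .w n 0 n k n.zero_le hkn := by
  obtain ⟨hdom, hrg⟩ := (goes_iff isId_id isId_id).mp h
  cases a <;> grind [dom, rg]

theorem splitableG_id {n k : ℕ} (hk : 1 ≤ k) (hkn : k ≤ n) :
    SplitableG (Atom.id n 0 n.zero_le) (.id n k hkn) := by
  refine ⟨by grind, .r n k hk hkn, .w n 0 n k n.zero_le hkn, Atom.noConfusion, ?_, ?_⟩ <;>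
    exact (goes_iff isId_id isId_id).mpr ⟨rfl, rfl⟩

theorem exchanges_exchangeAut (k : ℕ+) {n : ℕ} (hkn : k ≤ n) :
    Exchanges (exchangeAut k) (.id n 0 n.zero_le) (.id n k hkn) := by
  intro a b ha hb hab
  obtain rfl | rfl := eq_r_or_eq_w k.pos hkn ha <;> obtain rfl | rfl := eq_r_or_eq_w k.pos hkn hb
  · contradiction
  · exact if_pos rfl
  · exact dif_pos ⟨rfl, rfl, rfl⟩
  · contradiction

end Atom

/-- The class modulo `D` of the sequence `(id n k)_{n ∈ ℕ}`, where `k` is replaced by `n` in the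
terms with `n < k`, in which `id n k` does not exist. -/
def idClass (D : Ultrafilter ℕ) (k : ℕ) : (D : Filter ℕ).Product fun _ => Atom :=
  ultraMk D fun n => .id n (min k n) (min_le_right k n)

theorem idClass_zero (D : Ultrafilter ℕ) : idClass D 0 = ultraMk D fun n => .id n 0 n.zero_le := by
  simp [idClass]

theorem mI_idClass (D : Ultrafilter ℕ) (k : ℕ) : mI (idClass D k) :=
  mI_ultraMk_iff.mpr (.of_forall fun _ => trivial)

section Nonprincipal

variable {D : Ultrafilter ℕ}

theorem le_atTop_of_forall_ne_pure (hD : ∀ n : ℕ, D ≠ pure n) : (D : Filter ℕ) ≤ Filter.atTop :=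
  Nat.cofinite_eq_atTop ▸ D.le_cofinite_or_eq_pure.resolve_right fun ⟨n, hn⟩ => hD n hn

theorem idClass_injective (hD : (D : Filter ℕ) ≤ Filter.atTop) :
    Function.Injective (idClass D) := by
  intro k l h
  have hge := hD (Filter.eventually_ge_atTop (max k l))
  obtain ⟨n, hn, hkl⟩ := ((ultraMk_eq_iff.mp h).and hge).exists
  simp only [Atom.id.injEq] at hn
  omega

theorem splitableG_idClass (hD : (D : Filter ℕ) ≤ Filter.atTop) (k : ℕ+) :
    SplitableG (idClass D 0) (idClass D k) := by
  refine splitableG_ultraMk (hD ?_)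
  filter_upwards [Filter.eventually_ge_atTop (k : ℕ)] with n hn
  simpa [hn] using Atom.splitableG_id k.pos hn

theorem exchanges_idClass (hD : (D : Filter ℕ) ≤ Filter.atTop) (k : ℕ+) :
    Exchanges (ultraproductCongr D fun _ => Atom.exchangeAut k) (idClass D 0) (idClass D k) := by
  refine exchanges_ultraproductCongr (hD ?_)
  filter_upwards [Filter.eventually_ge_atTop (k : ℕ)] with n hn
  simpa [hn] using Atom.exchanges_exchangeAut k hn

end Nonprincipal

/-- Let `D` be a nonprincipal ultrafilter on `ℕ`, `Z'` the corresponding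
ultrapower of `Z`, and `x` the class modulo `D` of the sequence
`(id n 0)_{n ∈ ℕ}`.  Then `x ∈ I'`, the set of `y ∈ I'` with `(x,y)`
splitable is infinite, and no member of the term algebra of `Z'` splits all
splitable pairs `(x,y)`. -/
theorem stmt_13 (D : Ultrafilter ℕ) (hD : ∀ n : ℕ, D ≠ pure n)
    (x : UPow ℕ D)
    (hx : x = Quotient.mk ((D : Filter ℕ).productSetoid fun _ : ℕ => Atom)
      (fun n : ℕ => Atom.id n 0 (Nat.zero_le n))) :
    mI x ∧
    {y : UPow ℕ D | mI y ∧ SplitableG x y}.Infinite ∧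
    ¬ ∃ X : Set (UPow ℕ D), InTA (UPow ℕ D) X ∧
        ∀ y : UPow ℕ D, mI y → SplitableG x y → SplitsG X x y := by
  obtain rfl : x = idClass D 0 := hx.trans (idClass_zero D).symm
  have hD' := le_atTop_of_forall_ne_pure hD
  refine ⟨mI_idClass D 0, ?_, ?_⟩
  · exact Set.infinite_of_injective_forall_mem ((idClass_injective hD').comp PNat.coe_injective)
      fun k => ⟨mI_idClass D k, splitableG_idClass hD' k⟩
  · rintro ⟨X, hX, hsplits⟩
    obtain ⟨k, hk⟩ := InTA.exists_not_splitsG hX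
      (fun a => (subsingleton_setOf_ultraproductCongr_ne
        (fun _ => Atom.subsingleton_setOf_exchange_ne) D a).finite)
      (exchanges_idClass hD')
    exact hk (hsplits _ (mI_idClass D k) (splitableG_idClass hD' k))
end
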